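/- Let n and k be positive integers with k > ⌈2n/3⌉. If G is a connected simple graph on n vertices with dissociation number k that attains the minimum spectral radius among all connected simple graphs on n vertices with dissociation number k, then G is a tree (i.e., G is connected and acyclic). -/

import Mathlib

/-- `S` is a dissociation set of `G`: the subgraph induced by `S` has maximum degree ≤ 1. -/
def IsDissocSet {V : Type} (G : SimpleGraph V) (S : Set V) : Prop :=
  ∀ v ∈ S, ({u ∈ S | G.Adj v u}).ncard ≤ 1

/-- The dissociation number of `G`: the maximum cardinality of a dissociation set. -/
noncomputable def dissNum {V : Type} [Fintype V] (G : SimpleGraph V) : ℕ :=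
  sSup {k | ∃ S : Set V, IsDissocSet G S ∧ S.ncard = k}

open scoped Classical in
/-- The (real) adjacency matrix of a simple graph. -/
noncomputable def adjMat {V : Type} [Fintype V] (G : SimpleGraph V) : Matrix V V ℝ :=
  Matrix.of fun i j => if G.Adj i j then 1 else 0

/-- The spectral radius of a simple graph: the largest eigenvalue of its adjacency matrix. -/
noncomputable def specRad {V : Type} [Fintype V] (G : SimpleGraph V) : ℝ :=
  sSup {t : ℝ | ∃ v : V → ℝ, v ≠ 0 ∧ (adjMat G).mulVec v = t • v}


/-!
The spectral radius of a connected graph strictly drops when edges are deleted, provided the graph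
stays connected, and deleting edges never lowers the dissociation number. Hence a connected graph
of minimum spectral radius among those with dissociation number at least `k` is a tree, and it is
enough to see that this minimiser has dissociation number exactly `k`.

If the tree is a path on `n` vertices, its dissociation number is at most `⌈2n/3⌉ ≤ k`. Otherwise
start at a leaf `u` and walk to the first vertex `v` of degree at least three. The reversal of this
path is an automorphism of the graph `G₀` obtained by cutting the other edges at `v`, so hanging the
branches `C` of `v` at `u` instead gives an isomorphic tree. Distributing `C = A ∪ B`, with `A` and
`B` nonempty, among `u` and `v` is strictly better: if the Perron vector `x` of `G₀ + uA + vB`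
satisfies `x u ≤ x v`, moving `A` back to `v` increases the spectral radius, and otherwise moving
`B` to `u` does. When `A` is a single vertex, only an edge at `u` is created, so the dissociation
number drops by at most one: a minimiser with dissociation number above `k` could be improved.
-/

open Matrix SimpleGraph

section Spectrum

open scoped MatrixOrder

variable {ι : Type*} [Fintype ι] {A : Matrix ι ι ℝ} {t : ℝ} {x : ι → ℝ}

lemma spectrum_real_eq_setOf_mulVec_eq_smul [DecidableEq ι] (A : Matrix ι ι ℝ) :
    spectrum ℝ A = {t | ∃ v ≠ 0, A *ᵥ v = t • v} := by
  ext t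
  rw [← spectrum_toLin', ← Module.End.hasEigenvalue_iff_mem_spectrum]
  refine ⟨fun h ↦ ?_, fun ⟨v, hv, h⟩ ↦ ?_⟩
  · obtain ⟨v, hv⟩ := h.exists_hasEigenvector
    exact ⟨v, hv.2, by simpa using hv.apply_eq_smul⟩
  · exact Module.End.hasEigenvalue_of_hasEigenvector
      ⟨Module.End.mem_eigenspace_iff.2 (by simpa using h), hv⟩

lemma posSemidef_smul_one_sub_of_spectrum_le [DecidableEq ι] (hA : A.IsHermitian)
    (ht : ∀ s ∈ spectrum ℝ A, s ≤ t) : (t • (1 : Matrix ι ι ℝ) - A).PosSemidef := by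
  rw [← Matrix.le_iff, ← Algebra.algebraMap_eq_smul_one]
  exact le_algebraMap_of_spectrum_le ht hA

lemma dotProduct_smul_one_sub_mulVec [DecidableEq ι] (A : Matrix ι ι ℝ) (t : ℝ) (x : ι → ℝ) :
    x ⬝ᵥ (t • (1 : Matrix ι ι ℝ) - A) *ᵥ x = t * (x ⬝ᵥ x) - x ⬝ᵥ A *ᵥ x := by
  simp [sub_mulVec, smul_mulVec, dotProduct_sub]

lemma dotProduct_mulVec_le_of_spectrum_le [DecidableEq ι] (hA : A.IsHermitian)
    (ht : ∀ s ∈ spectrum ℝ A, s ≤ t) (x : ι → ℝ) : x ⬝ᵥ A *ᵥ x ≤ t * (x ⬝ᵥ x) := by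
  have := (posSemidef_smul_one_sub_of_spectrum_le hA ht).dotProduct_mulVec_nonneg x
  rw [star_trivial, dotProduct_smul_one_sub_mulVec] at this
  linarith

lemma mulVec_eq_smul_of_spectrum_le [DecidableEq ι] (hA : A.IsHermitian)
    (ht : ∀ s ∈ spectrum ℝ A, s ≤ t) (hx : x ⬝ᵥ A *ᵥ x = t * (x ⬝ᵥ x)) : A *ᵥ x = t • x := by
  have h := ((posSemidef_smul_one_sub_of_spectrum_le hA ht).dotProduct_mulVec_zero_iff x).1 <| by
    rw [star_trivial, dotProduct_smul_one_sub_mulVec, hx, sub_self]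
  rw [sub_mulVec, smul_mulVec, one_mulVec, sub_eq_zero] at h
  exact h.symm

lemma dotProduct_mulVec_le_abs (hA : ∀ i j, 0 ≤ A i j) (x : ι → ℝ) :
    x ⬝ᵥ A *ᵥ x ≤ |x| ⬝ᵥ A *ᵥ |x| := by
  simp only [dotProduct, mulVec, Finset.mul_sum, mul_left_comm _ (A _ _), Pi.abs_apply]
  refine Finset.sum_le_sum fun i _ ↦ Finset.sum_le_sum fun j _ ↦ ?_
  exact mul_le_mul_of_nonneg_left ((le_abs_self _).trans_eq (abs_mul _ _)) (hA i j)

end Spectrum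

section SpectralRadius

variable {V W : Type} [Fintype V] [Fintype W] {G H : SimpleGraph V} {x : V → ℝ}

lemma adjMat_eq_adjMatrix (G : SimpleGraph V) [DecidableRel G.Adj] :
    adjMat G = G.adjMatrix ℝ := by
  ext i j
  simp [adjMat, adjMatrix_apply]

lemma isHermitian_adjMat (G : SimpleGraph V) : (adjMat G).IsHermitian := by
  classical
  simp [adjMat_eq_adjMatrix, IsHermitian]

lemma adjMat_nonneg (G : SimpleGraph V) (i j : V) : 0 ≤ adjMat G i j := by
  classical
  simp only [adjMat, of_apply]
  positivity

lemma specRad_eq_sSup_spectrum [DecidableEq V] (G : SimpleGraph V) :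
    specRad G = sSup (spectrum ℝ (adjMat G)) := by
  rw [spectrum_real_eq_setOf_mulVec_eq_smul]
  rfl

lemma le_specRad_of_mem_spectrum [DecidableEq V] {s : ℝ} (hs : s ∈ spectrum ℝ (adjMat G)) :
    s ≤ specRad G := by
  rw [specRad_eq_sSup_spectrum]
  exact le_csSup (finite_spectrum _).bddAbove hs

lemma exists_mulVec_eq_specRad_smul [Nonempty V] (G : SimpleGraph V) :
    ∃ x ≠ 0, adjMat G *ᵥ x = specRad G • x := by
  classical
  have hmem : specRad G ∈ spectrum ℝ (adjMat G) := by
    rw [specRad_eq_sSup_spectrum]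
    refine Set.Nonempty.csSup_mem ?_ (finite_spectrum _)
    rw [(isHermitian_adjMat G).spectrum_real_eq_range_eigenvalues]
    exact Set.range_nonempty _
  rwa [spectrum_real_eq_setOf_mulVec_eq_smul] at hmem

lemma specRad_eq_of_iso {H : SimpleGraph W} (e : G ≃g H) : specRad G = specRad H := by
  classical
  rw [specRad_eq_sSup_spectrum, specRad_eq_sSup_spectrum, adjMat_eq_adjMatrix,
    adjMat_eq_adjMatrix, ← e.reindex_adjMatrix ℝ]
  exact congrArg sSup (AlgEquiv.spectrum_eq (reindexAlgEquiv ℝ ℝ e.toEquiv) _).symm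

lemma dotProduct_adjMat_mulVec_le_specRad (G : SimpleGraph V) (x : V → ℝ) :
    x ⬝ᵥ adjMat G *ᵥ x ≤ specRad G * (x ⬝ᵥ x) := by
  classical
  exact dotProduct_mulVec_le_of_spectrum_le (isHermitian_adjMat G)
    (fun _ ↦ le_specRad_of_mem_spectrum) x

lemma adjMat_mulVec_eq_specRad_smul (hx : x ⬝ᵥ adjMat G *ᵥ x = specRad G * (x ⬝ᵥ x)) :
    adjMat G *ᵥ x = specRad G • x := by
  classical
  exact mulVec_eq_smul_of_spectrum_le (isHermitian_adjMat G)
    (fun _ ↦ le_specRad_of_mem_spectrum) hx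

lemma pos_of_adjMat_mulVec_eq_smul {t : ℝ} (hG : G.Connected) (hx : 0 ≤ x) (hx0 : x ≠ 0)
    (h : adjMat G *ᵥ x = t • x) (v : V) : 0 < x v := by
  classical
  by_contra hv
  obtain ⟨w, hw⟩ := Function.ne_iff.1 hx0
  obtain ⟨p⟩ := hG v w
  obtain ⟨d, -, ha, hb⟩ := p.exists_boundary_dart {a | x a = 0} ((hx v).antisymm' (not_lt.1 hv)) hw
  have hsum : ∑ u ∈ G.neighborFinset d.fst, x u = 0 := by
    rw [← adjMatrix_mulVec_apply, ← adjMat_eq_adjMatrix, h, Pi.smul_apply, ha, smul_zero]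
  exact hb <| (Finset.sum_eq_zero_iff_of_nonneg fun u _ ↦ hx u).1 hsum _ (by simp [d.adj])

lemma exists_pos_adjMat_mulVec_eq_specRad_smul (hG : G.Connected) :
    ∃ x : V → ℝ, (∀ v, 0 < x v) ∧ adjMat G *ᵥ x = specRad G • x := by
  have := hG.nonempty
  obtain ⟨x, hx0, hx⟩ := exists_mulVec_eq_specRad_smul G
  -- Passing to absolute values does not decrease the Rayleigh quotient.
  have habs : adjMat G *ᵥ |x| = specRad G • |x| := by
    refine adjMat_mulVec_eq_specRad_smul
      ((dotProduct_adjMat_mulVec_le_specRad G |x|).antisymm ?_)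
    calc specRad G * (|x| ⬝ᵥ |x|) = x ⬝ᵥ adjMat G *ᵥ x := by
          rw [hx, dotProduct_smul, smul_eq_mul]; simp [dotProduct]
      _ ≤ |x| ⬝ᵥ adjMat G *ᵥ |x| := dotProduct_mulVec_le_abs (adjMat_nonneg G) x
  exact ⟨|x|, pos_of_adjMat_mulVec_eq_smul hG (abs_nonneg x) (by simpa using hx0) habs, habs⟩

lemma specRad_lt_specRad_of_mulVec_ne (hx0 : x ≠ 0) (hx : adjMat H *ᵥ x = specRad H • x)
    (hle : x ⬝ᵥ adjMat H *ᵥ x ≤ x ⬝ᵥ adjMat G *ᵥ x) (hne : adjMat H *ᵥ x ≠ adjMat G *ᵥ x) :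
    specRad H < specRad G := by
  have hpos : 0 < x ⬝ᵥ x := dotProduct_star_self_pos_iff.2 hx0
  have hH : x ⬝ᵥ adjMat H *ᵥ x = specRad H * (x ⬝ᵥ x) := by simp [hx]
  have hG := dotProduct_adjMat_mulVec_le_specRad G x
  refine lt_of_le_of_ne (le_of_mul_le_mul_right (by linarith) hpos) fun heq ↦ hne ?_
  rw [hx, heq, adjMat_mulVec_eq_specRad_smul (hG.antisymm (by rw [← heq]; linarith))]

lemma neighborFinset_subset_of_le [DecidableRel G.Adj] [DecidableRel H.Adj] (hle : H ≤ G) (v : V) :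
    H.neighborFinset v ⊆ G.neighborFinset v := fun u ↦ by
  simpa only [mem_neighborFinset] using fun h ↦ hle h

lemma adjMat_mulVec_le_of_le (hle : H ≤ G) (hx : 0 ≤ x) : adjMat H *ᵥ x ≤ adjMat G *ᵥ x := by
  classical
  intro v
  simp only [adjMat_eq_adjMatrix, adjMatrix_mulVec_apply]
  exact Finset.sum_le_sum_of_subset_of_nonneg (neighborFinset_subset_of_le hle v)
    fun u _ _ ↦ hx u

lemma adjMat_mulVec_lt_of_le {a b : V} (hle : H ≤ G) (hG : G.Adj a b) (hH : ¬H.Adj a b)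
    (hx : 0 ≤ x) (hb : 0 < x b) : (adjMat H *ᵥ x) a < (adjMat G *ᵥ x) a := by
  classical
  simp only [adjMat_eq_adjMatrix, adjMatrix_mulVec_apply]
  exact Finset.sum_lt_sum_of_subset (neighborFinset_subset_of_le hle a) (by simpa using hG)
    (by simpa using hH) hb fun u _ _ ↦ hx u

lemma specRad_lt_specRad_of_lt (hH : H.Connected) (hlt : H < G) : specRad H < specRad G := by
  have := hH.nonempty
  obtain ⟨x, hxpos, hx⟩ := exists_pos_adjMat_mulVec_eq_specRad_smul hH
  obtain ⟨a, b, hG, hHab⟩ : ∃ a b, G.Adj a b ∧ ¬H.Adj a b := by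
    simpa [le_iff_adj] using hlt.not_ge
  have hx0 : 0 ≤ x := fun v ↦ (hxpos v).le
  refine specRad_lt_specRad_of_mulVec_ne (fun h ↦ (hxpos a).ne' (congrFun h a)) hx ?_ fun h ↦ ?_
  · exact dotProduct_le_dotProduct_of_nonneg_left (adjMat_mulVec_le_of_le hlt.le hx0) hx0
  · exact (adjMat_mulVec_lt_of_le hlt.le hG hHab hx0 (hxpos b)).ne (congrFun h a)

end SpectralRadius

section Star

variable {V : Type*} {G : SimpleGraph V} {u v : V} {A : Set V}

/-- The star with centre `v` whose set of leaves is `A \ {v}`, all other vertices being isolated.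
`G ⊔ starOn v A` is the graph `G` with the vertices of `A` attached to `v`. -/
def starOn (v : V) (A : Set V) : SimpleGraph V := (⊤ : SimpleGraph V).between {v} A

lemma starOn_adj {a b : V} :
    (starOn v A).Adj a b ↔ a ≠ b ∧ (a = v ∧ b ∈ A ∨ a ∈ A ∧ b = v) := Iff.rfl

lemma starOn_union (v : V) (A B : Set V) : starOn v (A ∪ B) = starOn v A ⊔ starOn v B := by
  ext a b
  simp only [starOn_adj, sup_adj, Set.mem_union]
  tauto

lemma starOn_le (h : ∀ a ∈ A, G.Adj v a) : starOn v A ≤ G := by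
  rintro a b ⟨-, ⟨rfl, hb⟩ | ⟨ha, rfl⟩⟩
  exacts [h b hb, (h a ha).symm]

lemma disjoint_starOn : Disjoint G (starOn v A) ↔ ∀ a ∈ A, ¬G.Adj v a := by
  refine ⟨fun h a ha hva ↦ ?_, fun h ↦ ?_⟩
  · exact h.le_bot (show (G ⊓ starOn v A).Adj v a from ⟨hva, hva.ne, Or.inl ⟨rfl, ha⟩⟩)
  · rw [disjoint_iff_inf_le]
    rintro a b ⟨hab, -, ⟨rfl, hb⟩ | ⟨ha, rfl⟩⟩
    exacts [h b hb hab, h a ha hab.symm]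

lemma connected_sup_starOn (hG : (G ⊔ starOn v A).Connected) (huv : (G ⊔ starOn u A).Reachable u v)
    (hu : u ∉ A) : (G ⊔ starOn u A).Connected := by
  have := hG.nonempty
  have hleaf : ∀ a ∈ A, (G ⊔ starOn u A).Reachable v a := fun a ha ↦
    huv.symm.trans (Adj.reachable (Or.inr ⟨by rintro rfl; exact hu ha, Or.inl ⟨rfl, ha⟩⟩))
  refine ⟨fun a b ↦ ?_⟩
  obtain ⟨p⟩ := hG a b
  induction p with
  | nil => rfl
  | cons h _ ih =>
    refine Reachable.trans ?_ ih
    obtain h | ⟨-, ⟨rfl, hb⟩ | ⟨ha, rfl⟩⟩ := h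
    · exact Adj.reachable (Or.inl h)
    · exact hleaf _ hb
    · exact (hleaf _ ha).symm

/-- An automorphism of `G` preserving `A` carries `G` with a star on `A` at `v` to `G` with a star
on `A` at `e v`. -/
def supStarOnIso (e : G ≃g G) (hA : ∀ a, e a ∈ A ↔ a ∈ A) (v : V) :
    (G ⊔ starOn v A) ≃g (G ⊔ starOn (e v) A) where
  toEquiv := e.toEquiv
  map_rel_iff' {a b} := by
    simp [starOn_adj, hA, e.map_adj_iff]

end Star

section Shift

variable {V : Type} [Fintype V] {G H : SimpleGraph V} {u v : V} {A B : Set V} {x : V → ℝ}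

lemma adjMat_sup (h : Disjoint G H) : adjMat (G ⊔ H) = adjMat G + adjMat H := by
  ext a b
  have hab : ¬(G.Adj a b ∧ H.Adj a b) := fun hab ↦ h.le_bot (show (G ⊓ H).Adj a b from hab)
  by_cases hG : G.Adj a b <;> by_cases hH : H.Adj a b <;> simp_all [adjMat]

lemma adjMat_starOn_mulVec [DecidableEq V] (hv : v ∉ A) (x : V → ℝ) :
    adjMat (starOn v A) *ᵥ x =
      (A.indicator 1 ⬝ᵥ x) • Pi.single v 1 + x v • A.indicator 1 := by
  have hrank : adjMat (starOn v A) = vecMulVec (Pi.single v 1) (A.indicator 1) +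
      vecMulVec (A.indicator 1) (Pi.single v 1) := by
    classical
    ext a b
    simp only [adjMat, starOn_adj, of_apply, Matrix.add_apply, vecMulVec_apply, Set.indicator_apply,
      Pi.single_apply, Pi.one_apply]
    grind
  simp [hrank, add_mulVec, vecMulVec_mulVec]

lemma specRad_sup_starOn_lt_of_le (huv : u ≠ v) (hu : u ∉ A) (hv : v ∉ A) (hA : A.Nonempty)
    (hGu : Disjoint G (starOn u A)) (hGv : Disjoint G (starOn v A)) (hxpos : ∀ a, 0 < x a)
    (hx : adjMat (G ⊔ starOn u A) *ᵥ x = specRad (G ⊔ starOn u A) • x) (hle : x u ≤ x v) :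
    specRad (G ⊔ starOn u A) < specRad (G ⊔ starOn v A) := by
  classical
  obtain ⟨a, ha⟩ := hA
  have hsum : 0 < A.indicator 1 ⬝ᵥ x := by
    refine Finset.sum_pos' (fun b _ ↦ ?_) ⟨a, Finset.mem_univ a, by simp [ha, hxpos]⟩
    exact mul_nonneg (Set.indicator_nonneg (by simp) b) (hxpos b).le
  refine specRad_lt_specRad_of_mulVec_ne (fun h ↦ (hxpos u).ne' (congrFun h u)) hx ?_ fun h ↦ ?_
  · simp only [adjMat_sup hGu, adjMat_sup hGv, add_mulVec, adjMat_starOn_mulVec hu,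
      adjMat_starOn_mulVec hv, dotProduct_add, dotProduct_smul, dotProduct_single_one, smul_eq_mul,
      dotProduct_comm x (A.indicator 1)]
    nlinarith
  · have := congrFun h u
    simp [adjMat_sup hGu, adjMat_sup hGv, add_mulVec, adjMat_starOn_mulVec hu,
      adjMat_starOn_mulVec hv, hu, huv, hsum.ne'] at this

lemma specRad_sup_starOn_lt (e : G ≃g G) (he : ∀ a, e a ∈ A ∪ B ↔ a ∈ A ∪ B) (hue : u ≠ e u)
    (hu : u ∉ A ∪ B) (hGu : ∀ a ∈ A ∪ B, ¬G.Adj u a) (hAB : Disjoint A B) (hA : A.Nonempty)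
    (hB : B.Nonempty) (hconn : (G ⊔ starOn u A ⊔ starOn (e u) B).Connected) :
    specRad (G ⊔ starOn u A ⊔ starOn (e u) B) < specRad (G ⊔ starOn (e u) (A ∪ B)) := by
  have hv : e u ∉ A ∪ B := (he u).not.2 hu
  have hGv : ∀ a ∈ A ∪ B, ¬G.Adj (e u) a := fun a ha h ↦ by
    rw [← e.apply_symm_apply a, e.map_adj_iff] at h
    exact hGu _ ((he _).1 (by simpa using ha)) h
  obtain ⟨x, hxpos, hx⟩ := exists_pos_adjMat_mulVec_eq_specRad_smul hconn
  simp only [Set.mem_union, not_or] at hu hv hGu hGv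
  have hAB' := Set.disjoint_left.1 hAB
  rcases le_total (x u) (x (e u)) with hle | hle
  · rw [sup_right_comm] at hx ⊢
    rw [starOn_union, sup_comm (starOn _ A), ← sup_assoc]
    refine specRad_sup_starOn_lt_of_le hue hu.1 hv.1 hA ?_ ?_ hxpos hx hle <;>
    · simp only [disjoint_starOn, sup_adj, starOn_adj]
      grind
  · rw [← specRad_eq_of_iso (supStarOnIso e he u), starOn_union, ← sup_assoc]
    refine specRad_sup_starOn_lt_of_le hue.symm hv.2 hu.2 hB ?_ ?_ hxpos hx hle <;>
    · simp only [disjoint_starOn, sup_adj, starOn_adj]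
      grind

end Shift

section PendantPath

variable {V W : Type*} {G : SimpleGraph V} {H : SimpleGraph W} {m : ℕ}

/-- The automorphism of `G` acting as `σ` on the range of `φ`, which no edge of `G` leaves, and
fixing all other vertices. -/
noncomputable def isoViaEmbedding (σ : H ≃g H) (φ : H ↪g G)
    (hφ : ∀ i x, G.Adj (φ i) x → x ∈ Set.range φ) : G ≃g G where
  toEquiv := Equiv.Perm.viaEmbedding σ.toEquiv φ.toEmbedding
  map_rel_iff' {a b} := by
    have hmem (i : W) : Equiv.Perm.viaEmbedding σ.toEquiv φ.toEmbedding (φ i) = φ (σ i) :=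
      Equiv.Perm.viaEmbedding_apply _ φ.toEmbedding i
    have hnot {x : V} (hx : x ∉ Set.range φ) :
        Equiv.Perm.viaEmbedding σ.toEquiv φ.toEmbedding x = x :=
      Equiv.Perm.viaEmbedding_apply_of_notMem _ φ.toEmbedding x hx
    have hφ' {i : W} {x : V} (hx : x ∉ Set.range φ) : ¬G.Adj (φ i) x := fun h ↦ hx (hφ i x h)
    by_cases ha : a ∈ Set.range φ <;> by_cases hb : b ∈ Set.range φ
    · obtain ⟨⟨i, rfl⟩, j, rfl⟩ := ha, hb
      simp [hmem, φ.map_adj_iff, σ.map_adj_iff]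
    · obtain ⟨i, rfl⟩ := ha
      simp [hmem, hnot hb, hφ' hb]
    · obtain ⟨j, rfl⟩ := hb
      simp [hmem, hnot ha, G.adj_comm a, hφ' ha]
    · rw [hnot ha, hnot hb]

/-- The reversal automorphism `i ↦ n - 1 - i` of the path graph on `n` vertices. -/
def pathGraphRevIso (n : ℕ) : pathGraph n ≃g pathGraph n where
  toEquiv := Fin.revPerm
  map_rel_iff' {a b} := by
    simp only [pathGraph_adj, Fin.revPerm_apply, Fin.val_rev]
    omega

lemma exists_iso_swap_ends (φ : pathGraph (m + 1) ↪g G)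
    (hφ : ∀ i x, G.Adj (φ i) x → x ∈ Set.range φ) :
    ∃ e : G ≃g G, e (φ 0) = φ (Fin.last m) ∧ ∀ x ∉ Set.range φ, e x = x := by
  refine ⟨isoViaEmbedding (pathGraphRevIso (m + 1)) φ hφ, ?_, fun x hx ↦ ?_⟩
  · calc isoViaEmbedding (pathGraphRevIso (m + 1)) φ hφ (φ 0)
        = φ (pathGraphRevIso (m + 1) 0) := Equiv.Perm.viaEmbedding_apply _ φ.toEmbedding 0
      _ = φ (Fin.last m) := by simp [pathGraphRevIso]
  · exact Equiv.Perm.viaEmbedding_apply_of_notMem _ φ.toEmbedding x hx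

/-- `φ` is a pendant path of `G`: only its last vertex may have neighbours outside it. In particular
`φ 0` is a leaf as soon as `m ≠ 0`. -/
def IsPendantPath (φ : pathGraph (m + 1) ↪g G) : Prop :=
  ∀ i ≠ Fin.last m, ∀ x, G.Adj (φ i) x → x ∈ Set.range φ

/-- The neighbours outside the path `φ` of its last vertex. For a pendant path these are all the
edges joining the path to the rest of the graph. -/
def branches (φ : pathGraph (m + 1) ↪g G) : Set V := G.neighborSet (φ (Fin.last m)) \ Set.range φ

lemma IsPendantPath.exists_snoc {φ : pathGraph (m + 1) ↪g G} {z : V} (hφ : IsPendantPath φ)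
    (hz : branches φ = {z}) :
    ∃ ψ : pathGraph (m + 2) ↪g G, IsPendantPath ψ := by
  obtain ⟨hadj, hzφ⟩ : z ∈ branches φ := hz ▸ rfl
  have hadj_iff : ∀ i, G.Adj (φ i) z ↔ i = Fin.last m := fun i ↦
    ⟨fun h ↦ by_contra fun hi ↦ hzφ (hφ i hi z h), fun h ↦ h ▸ hadj⟩
  let ψ : pathGraph (m + 2) ↪g G :=
    { toFun := Fin.snoc (α := fun _ ↦ V) φ z
      inj' := Fin.snoc_injective_iff.2 ⟨φ.injective, hzφ⟩
      map_rel_iff' := by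
        intro i j
        induction i using Fin.lastCases <;> induction j using Fin.lastCases <;>
          simp only [Function.Embedding.coeFn_mk, Fin.snoc_castSucc, Fin.snoc_last] <;>
          grind [pathGraph_adj, φ.map_adj_iff, G.irrefl, G.adj_comm z] }
  have hrange {x : V} : x ∈ Set.range ψ ↔ x = z ∨ x ∈ Set.range φ := by
    change x ∈ Set.range (Fin.snoc (α := fun _ ↦ V) φ z) ↔ _
    simp [Fin.range_snoc]
  refine ⟨ψ, fun i hi x hx ↦ hrange.2 (or_iff_not_imp_right.2 fun hxφ ↦ ?_)⟩
  obtain ⟨j, rfl⟩ := Fin.exists_castSucc_eq.2 hi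
  have hj : G.Adj (φ j) x := by simpa [ψ] using hx
  obtain rfl : j = Fin.last m := by_contra fun h ↦ hxφ (hφ j h x hj)
  exact hz.subset ⟨hj, hxφ⟩

lemma IsPendantPath.exists_embedding_sdiff_starOn {φ : pathGraph (m + 1) ↪g G}
    (hφ : IsPendantPath φ) :
    ∃ φ₀ : pathGraph (m + 1) ↪g G \ starOn (φ (Fin.last m)) (branches φ), ⇑φ₀ = φ ∧
      ∀ i x, (G \ starOn (φ (Fin.last m)) (branches φ)).Adj (φ₀ i) x → x ∈ Set.range φ₀ := by
  refine ⟨⟨φ.toEmbedding, fun {i j} ↦ ?_⟩, rfl, fun i x h ↦ ?_⟩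
  · simp [starOn_adj, branches]
  · obtain ⟨hix, hstar⟩ : G.Adj (φ i) x ∧ ¬(starOn (φ (Fin.last m)) (branches φ)).Adj (φ i) x := h
    by_contra hx
    obtain rfl : i = Fin.last m := by_contra fun hi ↦ hx (hφ i hi x hix)
    exact hstar ⟨hix.ne, Or.inl ⟨rfl, hix, hx⟩⟩

lemma IsPendantPath.surjective {φ : pathGraph (m + 1) ↪g G} (hφ : IsPendantPath φ)
    (hG : G.Preconnected) (h : branches φ = ∅) : Function.Surjective φ := by
  by_contra hsurj
  obtain ⟨x, hx⟩ := not_forall.1 hsurj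
  obtain ⟨p⟩ := hG (φ 0) x
  obtain ⟨⟨⟨_, b⟩, hab⟩, -, ⟨i, rfl⟩, hb⟩ := p.exists_boundary_dart (Set.range φ) ⟨0, rfl⟩ hx
  by_cases hi : i = Fin.last m
  · subst hi
    exact h.subset ⟨hab, hb⟩
  · exact hb (hφ i hi b hab)

lemma exists_pathGraph_iso_or_isPendantPath [Finite V] (hG : G.Preconnected) {u : V}
    (hu : ∃! w, G.Adj u w) :
    (∃ n, Nonempty (pathGraph n ≃g G)) ∨
      ∃ m ≠ 0, ∃ φ : pathGraph (m + 1) ↪g G, IsPendantPath φ ∧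
        (branches φ).Nontrivial := by
  by_contra! hno
  obtain ⟨hiso, hbranch⟩ := hno
  have hlong (m : ℕ) : ∃ φ : pathGraph (m + 2) ↪g G, IsPendantPath φ := by
    induction m with
    | zero =>
      obtain ⟨w, hw, huniq⟩ := hu
      let φ : pathGraph 1 ↪g G :=
        { toFun _ := u, inj' := Function.injective_of_subsingleton _, map_rel_iff' := by simp }
      refine IsPendantPath.exists_snoc (φ := φ) (z := w)
        (fun i hi ↦ absurd (Fin.fin_one_eq_zero i) hi) ?_
      ext x
      simp only [branches, Set.mem_sdiff, mem_neighborSet, Set.mem_singleton_iff]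
      exact ⟨fun h ↦ huniq x h.1, fun h ↦ h ▸ ⟨hw, fun ⟨_, h⟩ ↦ hw.ne h⟩⟩
    | succ m ih =>
      obtain ⟨φ, hφ⟩ := ih
      rcases (branches φ).eq_empty_or_nonempty with h | h
      · have hsurj := hφ.surjective hG h
        exact (hiso _).elim (RelIso.ofSurjective φ hsurj)
      · obtain ⟨z, hz⟩ := h.exists_eq_singleton_or_nontrivial.resolve_right
          (Set.not_nontrivial_iff.2 (hbranch _ m.succ_ne_zero φ hφ))
        exact hφ.exists_snoc hz
  obtain ⟨φ, -⟩ := hlong (Nat.card V)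
  simpa using Finite.card_le_of_embedding φ.toEmbedding

end PendantPath

section DissociationNumber

variable {V W : Type} {G : SimpleGraph V} {H : SimpleGraph W} {S T : Set V}

lemma IsDissocSet.subset [Finite V] (hS : IsDissocSet G S) (hTS : T ⊆ S) : IsDissocSet G T :=
  fun v hv ↦ (Set.ncard_le_ncard (Set.inter_subset_inter_left _ hTS)).trans (hS v (hTS hv))

lemma IsDissocSet.image [Finite V] {f : V → W} (hS : IsDissocSet G S)
    (hadj : ∀ a ∈ S, ∀ b ∈ S, H.Adj (f a) (f b) → G.Adj a b) : IsDissocSet H (f '' S) := by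
  rintro _ ⟨v, hv, rfl⟩
  calc {w ∈ f '' S | H.Adj (f v) w}.ncard ≤ (f '' {u ∈ S | G.Adj v u}).ncard := by
        refine Set.ncard_le_ncard ?_
        rintro _ ⟨⟨u, hu, rfl⟩, hvu⟩
        exact ⟨u, ⟨hu, hadj v hv u hu hvu⟩, rfl⟩
    _ ≤ {u ∈ S | G.Adj v u}.ncard := Set.ncard_image_le
    _ ≤ 1 := hS v hv

lemma bddAbove_ncard_isDissocSet [Finite V] (G : SimpleGraph V) :
    BddAbove {k | ∃ S : Set V, IsDissocSet G S ∧ S.ncard = k} :=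
  ⟨Nat.card V, by rintro _ ⟨S, -, rfl⟩; exact S.ncard_le_card⟩

lemma IsDissocSet.ncard_le_dissNum [Fintype V] (hS : IsDissocSet G S) : S.ncard ≤ dissNum G :=
  le_csSup (bddAbove_ncard_isDissocSet G) ⟨S, hS, rfl⟩

lemma exists_isDissocSet_ncard_eq_dissNum [Fintype V] (G : SimpleGraph V) :
    ∃ S : Set V, IsDissocSet G S ∧ S.ncard = dissNum G :=
  Nat.sSup_mem (s := {k | ∃ S : Set V, IsDissocSet G S ∧ S.ncard = k})
    ⟨0, ∅, by simp [IsDissocSet], by simp⟩ (bddAbove_ncard_isDissocSet G)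

lemma dissNum_le_of_injective [Fintype V] [Fintype W] {f : V → W} (hf : f.Injective)
    (hadj : ∀ a b, H.Adj (f a) (f b) → G.Adj a b) : dissNum G ≤ dissNum H := by
  obtain ⟨S, hS, hcard⟩ := exists_isDissocSet_ncard_eq_dissNum G
  rw [← hcard, ← Set.ncard_image_of_injective S hf]
  exact (hS.image fun a _ b _ ↦ hadj a b).ncard_le_dissNum

lemma dissNum_anti [Fintype V] {G H : SimpleGraph V} (hle : H ≤ G) : dissNum G ≤ dissNum H :=
  dissNum_le_of_injective Function.injective_id fun _ _ h ↦ hle h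

lemma dissNum_eq_of_iso [Fintype V] [Fintype W] (e : G ≃g H) : dissNum G = dissNum H :=
  (dissNum_le_of_injective e.injective fun _ _ ↦ e.map_adj_iff.1).antisymm
    (dissNum_le_of_injective e.symm.injective fun _ _ ↦ e.symm.map_adj_iff.1)

lemma dissNum_le_add_one [Fintype V] {G H : SimpleGraph V} (u : V)
    (hadj : ∀ a ≠ u, ∀ b ≠ u, H.Adj a b → G.Adj a b) : dissNum G ≤ dissNum H + 1 := by
  obtain ⟨S, hS, hcard⟩ := exists_isDissocSet_ncard_eq_dissNum G
  have hSu : IsDissocSet H (S \ {u}) := by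
    rw [← Set.image_id (S \ {u})]
    exact (hS.subset Set.sdiff_subset).image fun a ha b hb ↦ hadj a ha.2 b hb.2
  calc dissNum G = S.ncard := hcard.symm
    _ ≤ (S \ {u}).ncard + 1 := by simpa using Set.ncard_le_ncard_sdiff_add_ncard S {u}
    _ ≤ dissNum H + 1 := by gcongr; exact hSu.ncard_le_dissNum

lemma count_le_of_forall_not_three_consecutive {P : ℕ → Prop} [DecidablePred P] :
    ∀ N, (∀ i, i + 2 < N → ¬(P i ∧ P (i + 1) ∧ P (i + 2))) → Nat.count P N ≤ (2 * N + 2) / 3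
  | 0, _ => by simp
  | 1, _ => Nat.count_le P
  | 2, _ => Nat.count_le P
  | N + 3, h => by
    have ih := count_le_of_forall_not_three_consecutive N fun i hi ↦ h i (by omega)
    have hN := h N (by omega)
    have hblock : Nat.count P (N + 3) ≤ Nat.count P N + 2 := by
      simp only [Nat.count_succ]
      grind
    omega

lemma dissNum_pathGraph_le (n : ℕ) : dissNum (pathGraph n) ≤ (2 * n + 2) / 3 := by
  classical
  obtain ⟨S, hS, hcard⟩ := exists_isDissocSet_ncard_eq_dissNum (pathGraph n)
  have hcount : S.ncard = Nat.count (· ∈ Fin.val '' S) n := by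
    rw [Nat.count_eq_card_filter_range, ← Set.ncard_image_of_injective S Fin.val_injective,
      ← Set.ncard_coe_finset]
    congr 1
    grind
  rw [← hcard, hcount]
  refine count_le_of_forall_not_three_consecutive n fun i hi ⟨h₀, h₁, h₂⟩ ↦ ?_
  have hmem {j : ℕ} (hj : j < n) : j ∈ Fin.val '' S → (⟨j, hj⟩ : Fin n) ∈ S := by
    rintro ⟨_, h, rfl⟩
    exact h
  have hsub := (Set.ncard_le_one (Set.toFinite _)).1 (hS _ (hmem (by omega) h₁))
  have heq := hsub ⟨i, by omega⟩ ⟨hmem _ h₀, by simp [pathGraph_adj]⟩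
    ⟨i + 2, hi⟩ ⟨hmem _ h₂, by simp [pathGraph_adj]⟩
  exact (Nat.lt_add_of_pos_right two_pos).ne (congrArg Fin.val heq)

end DissociationNumber

section TreeReduction

variable {V : Type} [Fintype V] {G : SimpleGraph V} {k m : ℕ}

lemma exists_connected_specRad_lt_of_iso {C : Set V} {u : V} (e : G ≃g G) (hue : u ≠ e u)
    (hreach : G.Reachable u (e u)) (hC : C.Nontrivial) (heC : ∀ a ∈ C, e a = a) (hu : u ∉ C)
    (hGu : ∀ a ∈ C, ¬G.Adj u a) (hconn : (G ⊔ starOn (e u) C).Connected) :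
    ∃ H : SimpleGraph V, H.Connected ∧ dissNum (G ⊔ starOn (e u) C) ≤ dissNum H + 1 ∧
      specRad H < specRad (G ⊔ starOn (e u) C) := by
  obtain ⟨a, ha, b, hb, hab⟩ := hC
  have hunion : {a} ∪ C \ {a} = C := Set.union_sdiff_cancel (Set.singleton_subset_iff.2 ha)
  have heC' (x : V) : e x ∈ C ↔ x ∈ C :=
    ⟨fun h ↦ e.injective (heC _ h) ▸ h, fun h ↦ (heC x h).symm ▸ h⟩
  have hH : (G ⊔ starOn u {a} ⊔ starOn (e u) (C \ {a})).Connected := by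
    rw [sup_right_comm]
    refine connected_sup_starOn (v := e u) ?_ (hreach.mono (le_sup_left.trans le_sup_left))
      (by rintro rfl; exact hu ha)
    rwa [sup_assoc, ← starOn_union, Set.union_comm, hunion]
  refine ⟨_, hH, dissNum_le_add_one u ?_, ?_⟩
  · simp only [sup_adj, starOn_adj]
    grind
  · rw [← hunion] at heC' hu hGu
    simpa only [hunion] using specRad_sup_starOn_lt e heC' hue hu hGu Set.disjoint_sdiff_right
      (Set.singleton_nonempty a) ⟨b, hb, hab.symm⟩ hH

lemma exists_connected_specRad_lt_of_isPendantPath {φ : pathGraph (m + 1) ↪g G}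
    (hG : G.Connected) (hφ : IsPendantPath φ) (hm : m ≠ 0) (hC : (branches φ).Nontrivial) :
    ∃ H : SimpleGraph V, H.Connected ∧ dissNum G ≤ dissNum H + 1 ∧ specRad H < specRad G := by
  obtain ⟨φ₀, hφ₀, hclosed⟩ := hφ.exists_embedding_sdiff_starOn
  obtain ⟨e, he, hefix⟩ := exists_iso_swap_ends φ₀ hclosed
  rw [hφ₀] at he hefix hclosed
  have hne : φ 0 ≠ φ (Fin.last m) := φ.injective.ne fun h ↦ hm (congrArg Fin.val h).symm
  have hreach := (pathGraph_preconnected _ 0 (Fin.last m)).map φ₀.toHom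
  have hG_eq :
      (G \ starOn (φ (Fin.last m)) (branches φ)) ⊔ starOn (φ (Fin.last m)) (branches φ) = G :=
    sdiff_sup_cancel (starOn_le fun _ h ↦ h.1)
  have key := exists_connected_specRad_lt_of_iso (C := branches φ) (u := φ 0) e
    (by rwa [he]) (by simpa [hφ₀, he] using hreach) hC (fun a ha ↦ hefix a ha.2)
    (fun h ↦ h.2 ⟨0, rfl⟩) (fun a ha h ↦ ha.2 (hclosed 0 a h)) (by rwa [he, hG_eq])
  rwa [he, hG_eq] at key

lemma exists_specRad_lt_of_isTree (hG : G.IsTree)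
    (hk : (2 * Fintype.card V + 2) / 3 < dissNum G) :
    ∃ H : SimpleGraph V, H.Connected ∧ dissNum G ≤ dissNum H + 1 ∧ specRad H < specRad G := by
  classical
  obtain ⟨S, -, hS⟩ := exists_isDissocSet_ncard_eq_dissNum G
  have hcard := S.ncard_le_card
  rw [hS, Nat.card_eq_fintype_card] at hcard
  have : Nontrivial V := Fintype.one_lt_card_iff_nontrivial.1 (by omega)
  obtain ⟨u, hu⟩ := hG.exists_vert_degree_one_of_nontrivial
  rw [degree_eq_one_iff_existsUnique_adj] at hu
  obtain ⟨n, ⟨e⟩⟩ | ⟨m, hm, φ, hφ, hC⟩ :=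
    exists_pathGraph_iso_or_isPendantPath hG.1.preconnected hu
  · have hn : Fintype.card V = n := by simpa using (Fintype.card_congr e.toEquiv).symm
    rw [← dissNum_eq_of_iso e, hn] at hk
    exact absurd (dissNum_pathGraph_le n) hk.not_ge
  · exact exists_connected_specRad_lt_of_isPendantPath hG.1 hφ hm hC

lemma isTree_of_forall_specRad_le (hG : G.Connected) (hk : k ≤ dissNum G)
    (hmin : ∀ H : SimpleGraph V, H.Connected → k ≤ dissNum H → specRad G ≤ specRad H) :
    G.IsTree := by
  obtain ⟨T, hle, hT⟩ := hG.exists_isTree_le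
  obtain rfl | hlt := hle.eq_or_lt
  · exact hT
  · exact absurd (hmin T hT.1 (hk.trans (dissNum_anti hle)))
      (specRad_lt_specRad_of_lt hT.1 hlt).not_ge

lemma le_specRad_of_forall_fin {n : ℕ} {r : ℝ} (hcard : Fintype.card V = n)
    (hmin : ∀ H : SimpleGraph (Fin n), H.Connected → dissNum H = k → r ≤ specRad H)
    (hG : G.Connected) (hk : dissNum G = k) : r ≤ specRad G := by
  have e := G.overFinIso hcard
  rw [specRad_eq_of_iso e]
  exact hmin _ (e.connected_iff.1 hG) (dissNum_eq_of_iso e ▸ hk)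

end TreeReduction

theorem minimum_spectral_radius_is_tree_general
    {k : ℕ} {V : Type} [Fintype V] {G : SimpleGraph V} (hk : (2 * Fintype.card V + 2) / 3 ≤ k)
    (hconn : G.Connected) (hdiss : k ≤ dissNum G)
    (hmin : ∀ H : SimpleGraph V, H.IsTree → dissNum H = k → specRad G ≤ specRad H) :
    G.IsTree := by
  obtain ⟨T, ⟨hTconn, hTk⟩, hTmin⟩ := Set.exists_min_image
    {H : SimpleGraph V | H.Connected ∧ k ≤ dissNum H} specRad (Set.toFinite _) ⟨G, hconn, hdiss⟩
  have hT : T.IsTree := isTree_of_forall_specRad_le hTconn hTk fun H hH hHk ↦ hTmin H ⟨hH, hHk⟩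
  have hTk' : dissNum T = k := by
    by_contra hne
    obtain ⟨H, hH, hTH, hlt⟩ := exists_specRad_lt_of_isTree hT (by omega)
    exact hlt.not_ge (hTmin H ⟨hH, by omega⟩)
  exact isTree_of_forall_specRad_le hconn hdiss fun H hH hHk ↦
    (hmin T hT hTk').trans (hTmin H ⟨hH, hHk⟩)

/-- If `k > ⌈2n/3⌉` and a connected graph `G` of order `n` with dissociation number `k`
attains the minimum spectral radius among all connected graphs of order `n` with
dissociation number `k`, then `G` is a tree.  (Here `⌈2n/3⌉ = (2n+2)/3` in `ℕ`.) -/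
theorem minimum_spectral_radius_is_tree
    {n k : ℕ} (hn : 0 < n) (hk : 0 < k) (hceil : (2 * n + 2) / 3 < k)
    {V : Type} [Fintype V] (G : SimpleGraph V)
    (hcard : Fintype.card V = n) (hconn : G.Connected) (hdiss : dissNum G = k)
    (hmin : ∀ H : SimpleGraph (Fin n), H.Connected → dissNum H = k →
      specRad G ≤ specRad H) :
    G.IsTree := by
  exact minimum_spectral_radius_is_tree_general (hcard ▸ hceil.le) hconn hdiss.ge
    fun _ hH hHk ↦ le_specRad_of_forall_fin hcard hmin hH.1 hHk
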